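/- arXiv:1612.07607 — 2 statements merged into one kernel-verified Lean document; each statement's English description precedes it below -/
import Mathlib

section
/- Let ρ be a bipartite state on ℂ^{dA}⊗ℂ^{dB}, β a unit vector in ℂ^{dB}, and p > 0. Suppose there is an effect E on ℂ^{dA} with Tr_A[ρ(E⊗I_B)] = p|β⟩⟨β|, and p is the maximal steering probability for the steered state |β⟩⟨β|: for every effect F and every q ≥ 0 with Tr_A[ρ(F⊗I_B)] = q|β⟩⟨β| one has q ≤ p. Then there exist m ≤ dA and orthonormal vectors α_1,…,α_m in ℂ^{dA} such that Σ_{i=1}^m Tr_A[ρ(|α_i⟩⟨α_i|⊗I_B)] = p|β⟩⟨β|. (Non-degenerate projective measurements are as efficient as general POVM effects for producing pure steered states.) -/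
/-!
Let `P` be the support projection of the effect `E`, i.e. the sum of the projections onto an
orthonormal family of eigenvectors of `E` with positive eigenvalues. Then `E ≤ P ≤ c E` for some
constant `c`, and since `ρ ≥ 0` the map `F ↦ Tr_A[ρ(F ⊗ I_B)]` preserves these inequalities. The
upper bound puts the conditional state of `P` below a multiple of `|β⟩⟨β|`, which forces it to be
`q|β⟩⟨β|` for some `q`; the lower bound gives `p ≤ q`, and maximality of `p` gives `q ≤ p`.
-/

open scoped BigOperators Kronecker Classical ComplexOrder

namespace EPR

noncomputable section

/-- Complex inner product `⟨u, v⟩ = ∑ conj (u a) * v a` (conjugate-linear in the first slot). -/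
def cinner {ι : Type*} [Fintype ι] (u v : ι → ℂ) : ℂ :=
  ∑ a, (starRingEnd ℂ) (u a) * v a

/-- `u` is a unit vector. -/
def IsUnitVec {ι : Type*} [Fintype ι] (u : ι → ℂ) : Prop := cinner u u = 1

/-- Rank-one projection `|u⟩⟨u|`, with entries `u k * conj (u l)`. -/
def proj {ι : Type*} [Fintype ι] (u : ι → ℂ) : Matrix ι ι ℂ :=
  Matrix.of fun k l => u k * (starRingEnd ℂ) (u l)

/-- Rank-one operator `|u⟩⟨v|`, with entries `u k * conj (v l)`. -/
def outer {ι : Type*} [Fintype ι] (u v : ι → ℂ) : Matrix ι ι ℂ :=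
  Matrix.of fun k l => u k * (starRingEnd ℂ) (v l)

/-- A state: positive semidefinite matrix of trace 1. -/
def IsState {ι : Type*} [Fintype ι] (ρ : Matrix ι ι ℂ) : Prop :=
  ρ.PosSemidef ∧ ρ.trace = 1

/-- An effect: `0 ≤ E ≤ I` in the Loewner order. -/
def IsEffect {d : ℕ} (E : Matrix (Fin d) (Fin d) ℂ) : Prop :=
  E.PosSemidef ∧ (1 - E).PosSemidef

/-- Conditional state `Tr_A[ρ (E ⊗ I_B)]` of a bipartite state for an effect `E` on A:
entries `(E')_{b b'} = ∑_{a,a'} E_{a' a} ρ_{(a,b),(a',b')}`. -/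
def condStateE {dA dB : ℕ} (ρ : Matrix (Fin dA × Fin dB) (Fin dA × Fin dB) ℂ)
    (E : Matrix (Fin dA) (Fin dA) ℂ) : Matrix (Fin dB) (Fin dB) ℂ :=
  Matrix.of fun b b' => ∑ a, ∑ a', E a' a * ρ (a, b) (a', b')

/-- Conditional state `Tr_A[ρ (|α⟩⟨α| ⊗ I_B)]` for a non-degenerate projective effect:
entries `∑_{a,a'} conj (α a) * α a' * ρ_{(a,b),(a',b')}`. -/
def condState {dA dB : ℕ} (ρ : Matrix (Fin dA × Fin dB) (Fin dA × Fin dB) ℂ)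
    (α : Fin dA → ℂ) : Matrix (Fin dB) (Fin dB) ℂ :=
  Matrix.of fun b b' => ∑ a, ∑ a', (starRingEnd ℂ) (α a) * α a' * ρ (a, b) (a', b')

/-- Tensor product vector `α ⊗ β` in `ℂ^{dA} ⊗ ℂ^{dB}`. -/
def tensor2 {dA dB : ℕ} (α : Fin dA → ℂ) (β : Fin dB → ℂ) : Fin dA × Fin dB → ℂ :=
  fun p => α p.1 * β p.2

/-- Tensor product vector `α ⊗ β ⊗ γ` in `ℂ^{dA} ⊗ ℂ^{dB} ⊗ ℂ^{dC}`. -/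
def tensor3 {dA dB dC : ℕ} (α : Fin dA → ℂ) (β : Fin dB → ℂ) (γ : Fin dC → ℂ) :
    Fin dA × Fin dB × Fin dC → ℂ :=
  fun p => α p.1 * β p.2.1 * γ p.2.2

/-- Reduced state of a tripartite pure state on AB:
`(ρ_Ψ)_{(a,b),(a',b')} = ∑_c Ψ_{a,b,c} conj (Ψ_{a',b',c})`. -/
def reducedAB {dA dB dC : ℕ} (Ψ : Fin dA × Fin dB × Fin dC → ℂ) :
    Matrix (Fin dA × Fin dB) (Fin dA × Fin dB) ℂ :=
  Matrix.of fun p q => ∑ c, Ψ (p.1, p.2, c) * (starRingEnd ℂ) (Ψ (q.1, q.2, c))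

/-- Partial contraction `⟨α|Ψ⟩ ∈ ℂ^{dB} ⊗ ℂ^{dC}`, with components
`∑_a conj (α a) Ψ_{a,b,c}`. -/
def aContract {dA dB dC : ℕ} (α : Fin dA → ℂ) (Ψ : Fin dA × Fin dB × Fin dC → ℂ) :
    Fin dB × Fin dC → ℂ :=
  fun p => ∑ a, (starRingEnd ℂ) (α a) * Ψ (a, p.1, p.2)

/-- A family of vectors is orthonormal. For `n = d` this is an orthonormal basis of `ℂ^d`. -/
def OrthonormalFam {d n : ℕ} (α : Fin n → Fin d → ℂ) : Prop :=
  ∀ i j, cinner (α i) (α j) = if i = j then 1 else 0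

/-- `ρ` is unsteerable from Alice's side for non-degenerate projective measurements:
there is a finite local-hidden-state ensemble reproducing all conditional states of
every non-degenerate projective measurement (orthonormal basis) on A. -/
def Unsteerable {dA dB : ℕ} (ρ : Matrix (Fin dA × Fin dB) (Fin dA × Fin dB) ℂ) : Prop :=
  ∃ (n : ℕ) (P : Fin n → ℝ) (σ : Fin n → Matrix (Fin dB) (Fin dB) ℂ),
    (∀ ξ, 0 ≤ P ξ) ∧ (∑ ξ, P ξ = 1) ∧ (∀ ξ, IsState (σ ξ)) ∧
    ∀ α : Fin dA → Fin dA → ℂ, OrthonormalFam α →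
      ∃ Q : Fin dA → Fin n → ℝ,
        (∀ a ξ, 0 ≤ Q a ξ ∧ Q a ξ ≤ 1) ∧ (∀ ξ, ∑ a, Q a ξ = 1) ∧
        ∀ a, condState ρ (α a) = ∑ ξ, ((Q a ξ * P ξ : ℝ) : ℂ) • σ ξ

/-- `ρ` is separable: a finite convex-type combination of product states. -/
def Separable {dA dB : ℕ} (ρ : Matrix (Fin dA × Fin dB) (Fin dA × Fin dB) ℂ) : Prop :=
  ∃ (n : ℕ) (q : Fin n → ℝ) (ρA : Fin n → Matrix (Fin dA) (Fin dA) ℂ)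
    (ρB : Fin n → Matrix (Fin dB) (Fin dB) ℂ),
    (∀ k, 0 ≤ q k) ∧ (∀ k, IsState (ρA k)) ∧ (∀ k, IsState (ρB k)) ∧
    ρ = ∑ k, ((q k : ℂ)) • (ρA k ⊗ₖ ρB k)

/-- A local hidden state model for an assemblage `As`, with outcomes `A`, measurement
labels `X`, hidden states `σ` with weights `P`, and response probabilities `R`. -/
def LHSModel {dB : ℕ} {A X : Type*} [Fintype A] {n : ℕ}
    (As : A → X → Matrix (Fin dB) (Fin dB) ℂ)
    (P : Fin n → ℝ) (σ : Fin n → Matrix (Fin dB) (Fin dB) ℂ)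
    (R : A → X → Fin n → ℝ) : Prop :=
  (∀ ξ, 0 ≤ P ξ) ∧ (∑ ξ, P ξ = 1) ∧ (∀ ξ, IsState (σ ξ)) ∧
  (∀ a x ξ, 0 ≤ R a x ξ ∧ R a x ξ ≤ 1) ∧ (∀ x ξ, ∑ a, R a x ξ = 1) ∧
  (∀ a x, As a x = ∑ ξ, ((R a x ξ * P ξ : ℝ) : ℂ) • σ ξ)

/-- Standard basis vector of `ℂ^d`. -/
def stdb {d : ℕ} (a : Fin d) : Fin d → ℂ := fun i => if i = a then 1 else 0

open Matrix
open scoped MatrixOrder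

section RankOne

variable {ι : Type*} [Fintype ι]

lemma cinner_eq_dotProduct (u v : ι → ℂ) : cinner u v = star u ⬝ᵥ v := rfl

lemma proj_eq_vecMulVec (u : ι → ℂ) : proj u = vecMulVec u (star u) := rfl

lemma posSemidef_proj (u : ι → ℂ) : (proj u).PosSemidef :=
  posSemidef_vecMulVec_self_star u

lemma trace_proj (u : ι → ℂ) : (proj u).trace = cinner u u := by
  rw [proj_eq_vecMulVec, trace_vecMulVec, dotProduct_comm, cinner_eq_dotProduct]

lemma proj_mulVec (u v : ι → ℂ) : proj u *ᵥ v = cinner u v • u := by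
  rw [proj_eq_vecMulVec, vecMulVec_mulVec, op_smul_eq_smul, cinner_eq_dotProduct]

lemma mul_proj (M : Matrix ι ι ℂ) (u : ι → ℂ) : M * proj u = vecMulVec (M *ᵥ u) (star u) :=
  mul_vecMulVec M u (star u)

lemma proj_mul_proj (u v : ι → ℂ) : proj u * proj v = cinner u v • vecMulVec u (star v) := by
  rw [mul_proj, proj_mulVec, smul_vecMulVec]

lemma proj_mul_mul_proj (M : Matrix ι ι ℂ) (u : ι → ℂ) :
    proj u * (M * proj u) = cinner u (M *ᵥ u) • proj u := by
  rw [mul_proj, mul_vecMulVec, proj_mulVec, smul_vecMulVec, proj_eq_vecMulVec]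

lemma IsUnitVec.smul_proj_le_smul_proj_iff {u : ι → ℂ} (hu : IsUnitVec u) {a b : ℝ} :
    (a : ℂ) • proj u ≤ (b : ℂ) • proj u ↔ a ≤ b := by
  rw [Matrix.le_iff, ← sub_smul, ← Complex.ofReal_sub]
  constructor
  · intro h
    have htrace := h.trace_nonneg
    rw [trace_smul, trace_proj, hu, smul_eq_mul, mul_one, Complex.zero_le_real] at htrace
    exact sub_nonneg.mp htrace
  · intro h
    exact (posSemidef_proj u).smul (Complex.zero_le_real.mpr (sub_nonneg.mpr h))

end RankOne

section Domination

variable {ι : Type*} [Fintype ι]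

lemma mulVec_eq_zero_of_le {𝕜 : Type*} [RCLike 𝕜] {M N : Matrix ι ι 𝕜} (hM : M.PosSemidef)
    (hMN : M ≤ N) {v : ι → 𝕜} (hv : N *ᵥ v = 0) : M *ᵥ v = 0 := by
  have hle := (Matrix.le_iff.mp hMN).dotProduct_mulVec_nonneg v
  rw [sub_mulVec, hv, zero_sub, dotProduct_neg, neg_nonneg] at hle
  exact (hM.dotProduct_mulVec_zero_iff v).mp (hle.antisymm (hM.dotProduct_mulVec_nonneg v))

lemma mul_proj_eq_self_of_le_smul_proj {u : ι → ℂ} (hu : IsUnitVec u) {M : Matrix ι ι ℂ}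
    (hM : M.PosSemidef) {c : ℂ} (hle : M ≤ c • proj u) : M * proj u = M := by
  refine ext_of_mulVec_single fun i => ?_
  have hker : (c • proj u) *ᵥ (Pi.single i 1 - proj u *ᵥ Pi.single i 1) = 0 := by
    have hidem : proj u * proj u = proj u := by
      rw [proj_mul_proj, hu, one_smul, proj_eq_vecMulVec]
    rw [smul_mulVec, mulVec_sub, mulVec_mulVec, hidem, sub_self, smul_zero]
  have hzero := mulVec_eq_zero_of_le hM hle hker
  rw [mulVec_sub, mulVec_mulVec, sub_eq_zero] at hzero
  exact hzero.symm

lemma exists_eq_smul_proj_of_le_smul_proj {u : ι → ℂ} (hu : IsUnitVec u) {M : Matrix ι ι ℂ}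
    (hM : M.PosSemidef) {c : ℂ} (hle : M ≤ c • proj u) :
    ∃ q : ℝ, M = (q : ℂ) • proj u := by
  have hright : M * proj u = M := mul_proj_eq_self_of_le_smul_proj hu hM hle
  have hleft : proj u * M = M := by
    simpa only [conjTranspose_mul, hM.isHermitian.eq, (posSemidef_proj u).isHermitian.eq] using
      congrArg conjTranspose hright
  have hreal : ((cinner u (M *ᵥ u)).re : ℂ) = cinner u (M *ᵥ u) :=
    (Complex.eq_re_of_ofReal_le (hM.dotProduct_mulVec_nonneg u)).symm
  refine ⟨(cinner u (M *ᵥ u)).re, ?_⟩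
  rw [hreal, ← proj_mul_mul_proj, hright, hleft]

end Domination

section Spectral

variable {ι : Type*} [Fintype ι] [DecidableEq ι] {A : Matrix ι ι ℂ}

lemma cinner_eigenvectorBasis (hA : A.IsHermitian) (i j : ι) :
    cinner (hA.eigenvectorBasis i) (hA.eigenvectorBasis j) = if i = j then 1 else 0 := by
  rw [← orthonormal_iff_ite.mp hA.eigenvectorBasis.orthonormal i j,
    EuclideanSpace.inner_eq_star_dotProduct, dotProduct_comm, cinner_eq_dotProduct]

lemma isUnitVec_eigenvectorBasis (hA : A.IsHermitian) (i : ι) :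
    IsUnitVec (hA.eigenvectorBasis i) :=
  (cinner_eigenvectorBasis hA i i).trans (if_pos rfl)

lemma sum_eigenvalues_smul_proj (hA : A.IsHermitian) :
    ∑ i, (hA.eigenvalues i : ℂ) • proj (hA.eigenvectorBasis i) = A := by
  conv_rhs => rw [hA.spectral_theorem, Unitary.conjStarAlgAut_apply]
  ext k l
  rw [mul_apply]
  simp only [Matrix.sum_apply, Matrix.smul_apply, mul_diagonal, star_apply,
    IsHermitian.eigenvectorUnitary_apply, proj, of_apply, Function.comp_apply, smul_eq_mul,
    RCLike.star_def, Complex.coe_algebraMap]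
  exact Finset.sum_congr rfl fun i _ => by ring

lemma eigenvalues_le_one (hA : A.IsHermitian) (hA1 : A ≤ 1) (i : ι) : hA.eigenvalues i ≤ 1 := by
  have hunit : star (hA.eigenvectorBasis i).ofLp ⬝ᵥ (hA.eigenvectorBasis i).ofLp = 1 :=
    isUnitVec_eigenvectorBasis hA i
  have hnonneg := (Matrix.le_iff.mp hA1).re_dotProduct_nonneg (hA.eigenvectorBasis i).ofLp
  rw [sub_mulVec, one_mulVec, dotProduct_sub, hunit, map_sub, ← hA.eigenvalues_eq,
    RCLike.one_re] at hnonneg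
  exact sub_nonneg.mp hnonneg

/-- The spectral projection of a Hermitian matrix onto its positive eigenvalues; for a positive
semidefinite matrix this is the support projection. -/
def posEigenProj (hA : A.IsHermitian) : Matrix ι ι ℂ :=
  ∑ i with 0 < hA.eigenvalues i, proj (hA.eigenvectorBasis i)

lemma sum_pos_eigenvalues_smul_proj (hA : A.PosSemidef) :
    ∑ i with 0 < hA.1.eigenvalues i,
      (hA.1.eigenvalues i : ℂ) • proj (hA.1.eigenvectorBasis i) = A := by
  conv_rhs => rw [← sum_eigenvalues_smul_proj hA.1]
  refine Finset.sum_filter_of_ne fun i _ hne => (hA.eigenvalues_nonneg i).lt_of_ne' fun hzero => ?_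
  rw [hzero, Complex.ofReal_zero, zero_smul] at hne
  exact hne rfl

lemma le_posEigenProj (hA : A.PosSemidef) (hA1 : A ≤ 1) : A ≤ posEigenProj hA.1 := by
  have hterm (i : ι) : (hA.1.eigenvalues i : ℂ) • proj (hA.1.eigenvectorBasis i) ≤
      proj (hA.1.eigenvectorBasis i) := by
    simpa only [Complex.ofReal_one, one_smul] using
      (isUnitVec_eigenvectorBasis hA.1 i).smul_proj_le_smul_proj_iff.mpr
        (eigenvalues_le_one hA.1 hA1 i)
  exact (sum_pos_eigenvalues_smul_proj hA).ge.trans (Finset.sum_le_sum fun i _ => hterm i)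

lemma exists_posEigenProj_le_smul (hA : A.PosSemidef) :
    ∃ c : ℝ, posEigenProj hA.1 ≤ (c : ℂ) • A := by
  set S : Finset ι := {i | 0 < hA.1.eigenvalues i}
  set c : ℝ := ∑ i ∈ S, (hA.1.eigenvalues i)⁻¹
  have hone_le (i : ι) (hi : i ∈ S) : 1 ≤ c * hA.1.eigenvalues i :=
    (inv_le_iff_one_le_mul₀ (Finset.mem_filter.mp hi).2).mp <|
      Finset.single_le_sum (fun j _ => inv_nonneg.mpr (hA.eigenvalues_nonneg j)) hi
  have hterm (i : ι) (hi : i ∈ S) : proj (hA.1.eigenvectorBasis i) ≤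
      (c : ℂ) • (hA.1.eigenvalues i : ℂ) • proj (hA.1.eigenvectorBasis i) := by
    simpa only [Complex.ofReal_one, one_smul, Complex.ofReal_mul, mul_smul] using
      (isUnitVec_eigenvectorBasis hA.1 i).smul_proj_le_smul_proj_iff.mpr (hone_le i hi)
  refine ⟨c, (Finset.sum_le_sum hterm).trans_eq ?_⟩
  rw [← Finset.smul_sum, sum_pos_eigenvalues_smul_proj hA]

end Spectral

section Orthonormal

variable {d : ℕ}

lemma exists_orthonormalFam_sum_proj_eq_posEigenProj {A : Matrix (Fin d) (Fin d) ℂ}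
    (hA : A.IsHermitian) :
    ∃ m : ℕ, m ≤ d ∧ ∃ α : Fin m → Fin d → ℂ, OrthonormalFam α ∧
      ∑ i, proj (α i) = posEigenProj hA := by
  set S : Finset (Fin d) := {i | 0 < hA.eigenvalues i}
  refine ⟨S.card, card_finset_fin_le S, fun k => hA.eigenvectorBasis (S.equivFin.symm k),
    fun i j => ?_, ?_⟩
  · simp [cinner_eigenvectorBasis]
  · rw [Equiv.sum_comp S.equivFin.symm fun i : S => proj (hA.eigenvectorBasis i)]
    exact Finset.sum_coe_sort S fun i => proj (hA.eigenvectorBasis i)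

lemma OrthonormalFam.isStarProjection_sum_proj {m : ℕ} {α : Fin m → Fin d → ℂ}
    (hα : OrthonormalFam α) : IsStarProjection (∑ i, proj (α i)) where
  isIdempotentElem := by
    simp only [IsIdempotentElem, Finset.sum_mul_sum, proj_mul_proj, hα _ _, ite_smul, one_smul,
      zero_smul, Finset.sum_ite_eq, Finset.mem_univ, if_true]
    rfl
  isSelfAdjoint := (posSemidef_sum _ fun i _ => posSemidef_proj (α i)).isHermitian

lemma OrthonormalFam.isEffect_sum_proj {m : ℕ} {α : Fin m → Fin d → ℂ}
    (hα : OrthonormalFam α) : IsEffect (∑ i, proj (α i)) :=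
  ⟨nonneg_iff_posSemidef.mp hα.isStarProjection_sum_proj.nonneg,
    nonneg_iff_posSemidef.mp hα.isStarProjection_sum_proj.one_sub_nonneg⟩

end Orthonormal

section ConditionalState

variable {dA dB : ℕ} (ρ : Matrix (Fin dA × Fin dB) (Fin dA × Fin dB) ℂ)

/-- The map `E ↦ Tr_A[ρ(E ⊗ I_B)]` sending an effect to its conditional state, extended linearly
to all matrices. -/
def condStateLinearMap : Matrix (Fin dA) (Fin dA) ℂ →ₗ[ℂ] Matrix (Fin dB) (Fin dB) ℂ where
  toFun := condStateE ρ
  map_add' E F := by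
    ext
    simp only [condStateE, of_apply, Matrix.add_apply, add_mul, Finset.sum_add_distrib]
  map_smul' c E := by
    ext
    simp only [condStateE, of_apply, Matrix.smul_apply, smul_eq_mul, mul_assoc, Finset.mul_sum,
      RingHom.id_apply]

lemma condStateE_smul (c : ℂ) (E : Matrix (Fin dA) (Fin dA) ℂ) :
    condStateE ρ (c • E) = c • condStateE ρ E :=
  map_smul (condStateLinearMap ρ) c E

lemma condStateE_sub (E F : Matrix (Fin dA) (Fin dA) ℂ) :
    condStateE ρ (E - F) = condStateE ρ E - condStateE ρ F :=
  map_sub (condStateLinearMap ρ) E F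

lemma condStateE_sum {κ : Type*} (s : Finset κ) (E : κ → Matrix (Fin dA) (Fin dA) ℂ) :
    condStateE ρ (∑ i ∈ s, E i) = ∑ i ∈ s, condStateE ρ (E i) :=
  map_sum (condStateLinearMap ρ) E s

lemma condStateE_proj (α : Fin dA → ℂ) : condStateE ρ (proj α) = condState ρ α := by
  ext
  simp only [condStateE, condState, proj, of_apply, mul_comm (α _)]

lemma condStateE_sum_proj {κ : Type*} (s : Finset κ) (α : κ → Fin dA → ℂ) :
    condStateE ρ (∑ i ∈ s, proj (α i)) = ∑ i ∈ s, condState ρ (α i) := by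
  simp only [condStateE_sum, condStateE_proj]

/-- The matrix of the map `|α⟩ ⊗ I_B : ℂ^{dB} → ℂ^{dA} ⊗ ℂ^{dB}`, which compresses a bipartite
state to its conditional state. -/
def tensorOne (dB : ℕ) (α : Fin dA → ℂ) : Matrix (Fin dA × Fin dB) (Fin dB) ℂ :=
  of fun x b => α x.1 * (1 : Matrix (Fin dB) (Fin dB) ℂ) x.2 b

lemma condState_eq_conjTranspose_mul_mul (α : Fin dA → ℂ) :
    condState ρ α = (tensorOne dB α)ᴴ * ρ * tensorOne dB α := by
  ext b b'
  simp only [condState, tensorOne, mul_apply, conjTranspose_apply, of_apply, Fintype.sum_prod_type,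
    one_apply, mul_ite, mul_one, mul_zero, apply_ite star, star_zero, ite_mul, zero_mul,
    Finset.sum_ite_eq', Finset.mem_univ, if_true, Finset.sum_mul, RCLike.star_def]
  rw [Finset.sum_comm]
  exact Finset.sum_congr rfl fun a' _ => Finset.sum_congr rfl fun a _ => mul_right_comm _ _ _

variable {ρ}

lemma posSemidef_condState (hρ : ρ.PosSemidef) (α : Fin dA → ℂ) :
    (condState ρ α).PosSemidef := by
  rw [condState_eq_conjTranspose_mul_mul]
  exact hρ.conjTranspose_mul_mul_same _

lemma posSemidef_condStateE (hρ : ρ.PosSemidef) {E : Matrix (Fin dA) (Fin dA) ℂ}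
    (hE : E.PosSemidef) : (condStateE ρ E).PosSemidef := by
  rw [← sum_eigenvalues_smul_proj hE.1, condStateE_sum]
  refine posSemidef_sum _ fun i _ => ?_
  rw [condStateE_smul, condStateE_proj]
  exact (posSemidef_condState hρ _).smul (Complex.zero_le_real.mpr (hE.eigenvalues_nonneg i))

lemma condStateE_monotone (hρ : ρ.PosSemidef) : Monotone (condStateE ρ) := fun E F hEF => by
  rw [Matrix.le_iff, ← condStateE_sub]
  exact posSemidef_condStateE hρ hEF

end ConditionalState

theorem stmt0_general {dA dB : ℕ} {ρ : Matrix (Fin dA × Fin dB) (Fin dA × Fin dB) ℂ}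
    (hρ : ρ.PosSemidef) {β : Fin dB → ℂ} (hβ : IsUnitVec β) {p : ℝ}
    {E : Matrix (Fin dA) (Fin dA) ℂ} (hE : IsEffect E)
    (hEβ : condStateE ρ E = (p : ℂ) • proj β) :
    ∃ m : ℕ, m ≤ dA ∧ ∃ α : Fin m → Fin dA → ℂ, OrthonormalFam α ∧
      ∃ q : ℝ, p ≤ q ∧ ∑ i, condState ρ (α i) = (q : ℂ) • proj β := by
  obtain ⟨m, hm, α, hα, hsupport⟩ := exists_orthonormalFam_sum_proj_eq_posEigenProj hE.1.1
  obtain ⟨c, hc⟩ := exists_posEigenProj_le_smul hE.1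
  have hlower : (p : ℂ) • proj β ≤ condStateE ρ (∑ i, proj (α i)) := by
    rw [← hEβ, hsupport]
    exact condStateE_monotone hρ (le_posEigenProj hE.1 hE.2)
  have hupper : condStateE ρ (∑ i, proj (α i)) ≤ ((c : ℂ) * p) • proj β := by
    rw [mul_smul, ← hEβ, ← condStateE_smul, hsupport]
    exact condStateE_monotone hρ hc
  obtain ⟨q, hq⟩ := exists_eq_smul_proj_of_le_smul_proj hβ
    (posSemidef_condStateE hρ hα.isEffect_sum_proj.1) hupper
  rw [hq] at hlower
  exact ⟨m, hm, α, hα, q, hβ.smul_proj_le_smul_proj_iff.mp hlower,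
    (condStateE_sum_proj ρ _ α).symm.trans hq⟩

/-- if an effect `E` steers Bob to the pure state `|β⟩⟨β|` with maximal
probability `p`, then the same conditional state is obtained by accumulating `m ≤ dA`
orthonormal rank-one (non-degenerate projective) effects. -/
theorem stmt0 {dA dB : ℕ} (ρ : Matrix (Fin dA × Fin dB) (Fin dA × Fin dB) ℂ)
    (hρ : IsState ρ) (β : Fin dB → ℂ) (hβ : IsUnitVec β) (p : ℝ) (hp : 0 < p)
    (E : Matrix (Fin dA) (Fin dA) ℂ) (hE : IsEffect E)
    (hEβ : condStateE ρ E = (p : ℂ) • proj β)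
    (hmax : ∀ (F : Matrix (Fin dA) (Fin dA) ℂ) (q : ℝ), IsEffect F → 0 ≤ q →
      condStateE ρ F = (q : ℂ) • proj β → q ≤ p) :
    ∃ m : ℕ, m ≤ dA ∧ ∃ α : Fin m → Fin dA → ℂ, OrthonormalFam α ∧
      (∑ i, condState ρ (α i)) = (p : ℂ) • proj β := by
  obtain ⟨m, hm, α, hα, q, hpq, hq⟩ := stmt0_general hρ.1 hβ hE hEβ
  have hqp : q ≤ p := hmax _ q hα.isEffect_sum_proj (hp.le.trans hpq)
    ((condStateE_sum_proj ρ _ α).trans hq)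
  exact ⟨m, hm, α, hα, hpq.antisymm hqp ▸ hq⟩

end

end EPR
end

section
/- Let Ψ be a unit vector in ℂ^{dA}⊗ℂ^{dB}⊗ℂ^{dC} with reduced state ρ_Ψ on AB, let α_1,…,α_m be orthonormal vectors in ℂ^{dA}, β a unit vector in ℂ^{dB}, and p > 0. If Σ_{i=1}^m Tr_A[ρ_Ψ(|α_i⟩⟨α_i|⊗I_B)] = p|β⟩⟨β|, then there exist unit vectors γ_1,…,γ_m ∈ ℂ^{dC} and complex numbers c_1,…,c_m with Σ_{i=1}^m |c_i|² = p such that Ψ = Σ_{i=1}^m c_i α_i⊗β⊗γ_i + Φ̃, where ⟨α_i|Φ̃⟩ = 0 for every i. -/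
/-!
Let `V i` be the `dB × dC` coefficient matrix of `⟨α i|Ψ⟩`. The conditional state of `α i` is
`V i * (V i)ᴴ`, so the hypothesis reads `∑ i, V i * (V i)ᴴ = p |β⟩⟨β|`. Compressing it by
`Q = 1 - |β⟩⟨β|` exhibits `0` as the sum of the positive matrices `(Q V i) (Q V i)ᴴ`; hence
`Q V i = 0`, that is, `⟨α i|Ψ⟩ = β ⊗ w i`. Substituting this back gives `∑ i, ‖w i‖² = p`, and
`c i`, `γ i` come from normalising `w i`.
-/

open scoped BigOperators Kronecker Classical ComplexOrder

namespace EPR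

noncomputable section

section Matrix

open Matrix
open scoped MatrixOrder

variable {𝕜 ι k l n : Type*} [Fintype ι] [Fintype k]

theorem sum_dotProduct_star_eq_of_sum_mul_conjTranspose [Field 𝕜] [StarRing 𝕜]
    {β : n → 𝕜} (hβ : β ≠ 0) {p : 𝕜} {w : ι → k → 𝕜}
    (h : ∑ i, vecMulVec β (w i) * (vecMulVec β (w i))ᴴ = p • vecMulVec β (star β)) :
    ∑ i, w i ⬝ᵥ star (w i) = p := by
  have hββ : vecMulVec β (star β) ≠ 0 := vecMulVec_ne_zero hβ (star_ne_zero.mpr hβ)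
  refine smul_left_injective 𝕜 hββ ?_
  simpa only [conjTranspose_vecMulVec, vecMulVec_mul_vecMulVec, vecMulVec_smul, smul_vecMulVec,
    Finset.sum_smul] using h

variable [RCLike 𝕜]

theorem sum_mul_conjTranspose_self_eq_zero_iff [Finite n] {V : ι → Matrix n k 𝕜} :
    ∑ i, V i * (V i)ᴴ = 0 ↔ ∀ i, V i = 0 := by
  rw [Finset.sum_eq_zero_iff_of_nonneg fun i _ => (posSemidef_self_mul_conjTranspose (V i)).nonneg]
  simp only [Finset.mem_univ, true_imp_iff, self_mul_conjTranspose_eq_zero]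

theorem mul_eq_zero_of_mul_sum_mul_conjTranspose_eq_zero [Finite l] [Fintype n]
    {Q : Matrix l n 𝕜} {V : ι → Matrix n k 𝕜} (h : Q * ∑ i, V i * (V i)ᴴ = 0) (i : ι) :
    Q * V i = 0 := by
  refine sum_mul_conjTranspose_self_eq_zero_iff (V := fun i => Q * V i).mp ?_ i
  calc ∑ i, Q * V i * (Q * V i)ᴴ = Q * (∑ i, V i * (V i)ᴴ) * Qᴴ := by
        simp only [conjTranspose_mul, Matrix.mul_sum, Matrix.sum_mul, Matrix.mul_assoc]
    _ = 0 := by rw [h, Matrix.zero_mul]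

theorem eq_vecMulVec_vecMul_of_sum_mul_conjTranspose [Fintype n] {β : n → 𝕜}
    (hβ : star β ⬝ᵥ β = 1) {p : 𝕜} {V : ι → Matrix n k 𝕜}
    (h : ∑ i, V i * (V i)ᴴ = p • vecMulVec β (star β)) (i : ι) :
    V i = vecMulVec β (star β ᵥ* V i) := by
  have compress_eq_zero : (1 - vecMulVec β (star β)) * ∑ i, V i * (V i)ᴴ = 0 := by
    rw [h, Matrix.mul_smul, mul_vecMulVec, sub_mulVec, one_mulVec, vecMulVec_mulVec, hβ,
      MulOpposite.op_one, one_smul, sub_self, zero_vecMulVec, smul_zero]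
  have mul_eq_zero := mul_eq_zero_of_mul_sum_mul_conjTranspose_eq_zero compress_eq_zero i
  rwa [Matrix.sub_mul, Matrix.one_mul, vecMulVec_mul, sub_eq_zero] at mul_eq_zero

end Matrix

section UnitVector

open Matrix

variable {ι : Type*} [Fintype ι]

theorem cinner_self_eq_norm_toLp_sq (u : ι → ℂ) : cinner u u = (‖WithLp.toLp 2 u‖ : ℂ) ^ 2 := by
  calc cinner u u = inner ℂ (WithLp.toLp 2 u) (WithLp.toLp 2 u) :=
        (dotProduct_comm _ _).trans (EuclideanSpace.inner_toLp_toLp u u).symm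
    _ = (‖WithLp.toLp 2 u‖ : ℂ) ^ 2 := inner_self_eq_norm_sq_to_K _

theorem isUnitVec_iff_norm_toLp_eq_one {u : ι → ℂ} : IsUnitVec u ↔ ‖WithLp.toLp 2 u‖ = 1 := by
  rw [IsUnitVec, cinner_self_eq_norm_toLp_sq]
  norm_cast
  exact pow_eq_one_iff_of_nonneg (norm_nonneg _) two_ne_zero

theorem IsUnitVec.ne_zero {u : ι → ℂ} (hu : IsUnitVec u) : u ≠ 0 := by
  rintro rfl
  simp [IsUnitVec, cinner] at hu

theorem IsUnitVec.nonempty {u : ι → ℂ} (hu : IsUnitVec u) : Nonempty ι :=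
  (Function.ne_iff.mp hu.ne_zero).nonempty

theorem IsUnitVec.smul_dotProduct_star_smul {u : ι → ℂ} (hu : IsUnitVec u) (c : ℂ) :
    (c • u) ⬝ᵥ star (c • u) = Complex.normSq c := by
  have dotProduct_star_self : u ⬝ᵥ star u = 1 := (dotProduct_comm _ _).trans hu
  rw [star_smul, smul_dotProduct, dotProduct_smul, dotProduct_star_self, smul_eq_mul, smul_eq_mul,
    mul_one, Complex.star_def, Complex.mul_conj]

theorem exists_isUnitVec_smul_eq [Nonempty ι] (w : ι → ℂ) :
    ∃ (c : ℂ) (u : ι → ℂ), IsUnitVec u ∧ c • u = w := by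
  rcases eq_or_ne w 0 with rfl | hw
  · obtain ⟨u, hu⟩ := exists_norm_eq (EuclideanSpace ℂ ι) zero_le_one
    exact ⟨0, u.ofLp, isUnitVec_iff_norm_toLp_eq_one.mpr hu, zero_smul ℂ _⟩
  · have toLp_ne_zero : WithLp.toLp 2 w ≠ 0 := (WithLp.toLp_eq_zero 2).not.mpr hw
    refine ⟨‖WithLp.toLp 2 w‖, (NormedSpace.normalize (WithLp.toLp 2 w)).ofLp,
      isUnitVec_iff_norm_toLp_eq_one.mpr (NormedSpace.norm_normalize toLp_ne_zero), ?_⟩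
    exact congrArg WithLp.ofLp (NormedSpace.norm_smul_normalize (WithLp.toLp 2 w))

end UnitVector

section Contraction

open Matrix

variable {dA dB dC m : ℕ}

/-- The contraction `⟨α|·⟩` on the first tensor factor as a linear map. -/
def aContractₗ (α : Fin dA → ℂ) :
    (Fin dA × Fin dB × Fin dC → ℂ) →ₗ[ℂ] (Fin dB × Fin dC → ℂ) where
  toFun := aContract α
  map_add' Ψ Φ := by
    ext
    simp only [aContract, Pi.add_apply, mul_add, Finset.sum_add_distrib]
  map_smul' c Ψ := by
    ext
    simp only [aContract, Pi.smul_apply, smul_eq_mul, RingHom.id_apply, Finset.mul_sum,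
      mul_left_comm]

/-- The coefficient matrix of `⟨α|Ψ⟩`, with rows indexed by the factor `B` and columns by `C`. -/
def aContractMatrix (α : Fin dA → ℂ) (Ψ : Fin dA × Fin dB × Fin dC → ℂ) :
    Matrix (Fin dB) (Fin dC) ℂ :=
  of fun b c => aContract α Ψ (b, c)

theorem condState_reducedAB (Ψ : Fin dA × Fin dB × Fin dC → ℂ) (α : Fin dA → ℂ) :
    condState (reducedAB Ψ) α = aContractMatrix α Ψ * (aContractMatrix α Ψ)ᴴ := by
  ext b b'
  simp only [condState, reducedAB, aContractMatrix, aContract, of_apply, mul_apply,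
    conjTranspose_apply, star_sum, star_mul', Complex.star_def, Complex.conj_conj,
    Finset.sum_mul_sum]
  simp only [Finset.mul_sum]
  rw [Finset.sum_comm_cycle]
  simp only [mul_mul_mul_comm]

theorem aContract_tensor3 (α α' : Fin dA → ℂ) (β : Fin dB → ℂ) (γ : Fin dC → ℂ) :
    aContract α (tensor3 α' β γ) = cinner α α' • tensor2 β γ := by
  ext
  simp only [aContract, tensor3, tensor2, cinner, Pi.smul_apply, smul_eq_mul, Finset.sum_mul,
    mul_assoc]

theorem tensor3_smul_right (α : Fin dA → ℂ) (β : Fin dB → ℂ) (c : ℂ) (γ : Fin dC → ℂ) :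
    tensor3 α β (c • γ) = c • tensor3 α β γ := by
  ext
  simp only [tensor3, Pi.smul_apply, smul_eq_mul, mul_left_comm]

theorem OrthonormalFam.aContract_sum_tensor3 {α : Fin m → Fin dA → ℂ} (hα : OrthonormalFam α)
    (β : Fin m → Fin dB → ℂ) (w : Fin m → Fin dC → ℂ) (i : Fin m) :
    aContract (α i) (∑ j, tensor3 (α j) (β j) (w j)) = tensor2 (β i) (w i) := by
  calc aContract (α i) (∑ j, tensor3 (α j) (β j) (w j))
      = ∑ j, aContract (α i) (tensor3 (α j) (β j) (w j)) := map_sum (aContractₗ (α i)) _ _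
    _ = tensor2 (β i) (w i) := by simp [aContract_tensor3, hα i]

theorem OrthonormalFam.aContract_sub_sum_tensor3 {α : Fin m → Fin dA → ℂ} (hα : OrthonormalFam α)
    {β : Fin m → Fin dB → ℂ} {w : Fin m → Fin dC → ℂ} {Ψ : Fin dA × Fin dB × Fin dC → ℂ}
    {i : Fin m} (h : aContract (α i) Ψ = tensor2 (β i) (w i)) :
    aContract (α i) (Ψ - ∑ j, tensor3 (α j) (β j) (w j)) = 0 := by
  calc aContract (α i) (Ψ - ∑ j, tensor3 (α j) (β j) (w j))
      = aContract (α i) Ψ - aContract (α i) (∑ j, tensor3 (α j) (β j) (w j)) :=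
        map_sub (aContractₗ (α i)) _ _
    _ = 0 := by rw [h, hα.aContract_sum_tensor3, sub_self]

theorem exists_aContract_eq_tensor2_of_sum_condState {Ψ : Fin dA × Fin dB × Fin dC → ℂ}
    {α : Fin m → Fin dA → ℂ} {β : Fin dB → ℂ} (hβ : IsUnitVec β) {p : ℂ}
    (h : ∑ i, condState (reducedAB Ψ) (α i) = p • proj β) :
    ∃ w : Fin m → Fin dC → ℂ,
      (∀ i, aContract (α i) Ψ = tensor2 β (w i)) ∧ ∑ i, w i ⬝ᵥ star (w i) = p := by
  let V i := aContractMatrix (α i) Ψ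
  have sum_gram : ∑ i, V i * (V i)ᴴ = p • vecMulVec β (star β) := by
    simp only [condState_reducedAB] at h
    exact h
  have hV := eq_vecMulVec_vecMul_of_sum_mul_conjTranspose hβ sum_gram
  refine ⟨fun i => star β ᵥ* V i, fun i => ?_, ?_⟩
  · funext ⟨b, c⟩
    exact congrFun₂ (hV i) b c
  · refine sum_dotProduct_star_eq_of_sum_mul_conjTranspose hβ.ne_zero ?_
    simpa only [← hV] using sum_gram

end Contraction

/-- if a sum of conditional states for orthonormal effects `|α_i⟩⟨α_i|`
equals `p |β⟩⟨β|`, then `Ψ = ∑ c_i α_i⊗β⊗γ_i + Φ` with unit vectors `γ_i`,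
`∑ |c_i|² = p`, and `⟨α_i|Φ⟩ = 0` for every `i`. -/
theorem stmt3 {dA dB dC m : ℕ} (Ψ : Fin dA × Fin dB × Fin dC → ℂ) (hΨ : IsUnitVec Ψ)
    (α : Fin m → Fin dA → ℂ) (hα : OrthonormalFam α)
    (β : Fin dB → ℂ) (hβ : IsUnitVec β) (p : ℝ) (hp : 0 < p)
    (h : (∑ i, condState (reducedAB Ψ) (α i)) = (p : ℂ) • proj β) :
    ∃ (γ : Fin m → Fin dC → ℂ) (c : Fin m → ℂ) (Φ : Fin dA × Fin dB × Fin dC → ℂ),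
      (∀ i, IsUnitVec (γ i)) ∧ (∑ i, Complex.normSq (c i)) = p ∧
      Ψ = (∑ i, c i • tensor3 (α i) β (γ i)) + Φ ∧
      ∀ i, aContract (α i) Φ = 0 := by
  have : Nonempty (Fin dC) := hΨ.nonempty.map fun abc => abc.2.2
  obtain ⟨w, contract_eq, sum_w⟩ := exists_aContract_eq_tensor2_of_sum_condState hβ h
  choose c γ hγ hw using fun i => exists_isUnitVec_smul_eq (w i)
  refine ⟨γ, c, Ψ - ∑ i, c i • tensor3 (α i) β (γ i), hγ, ?_, (add_sub_cancel _ _).symm,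
    fun i => ?_⟩
  · simp only [← hw, (hγ _).smul_dotProduct_star_smul] at sum_w
    exact_mod_cast sum_w
  · simp only [← tensor3_smul_right, hw]
    exact hα.aContract_sub_sum_tensor3 (contract_eq i)

end

end EPR
end
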